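/- Let G be the CPDAG of the Markov equivalence class of a DAG, and let X and Y be distinct nodes that are adjacent in G. If Y ∈ Pa_G(X), then X is not a possible ancestor of Y in G. Consequently, for adjacent X and Y, X is a possible ancestor of Y in G if and only if Y ∈ Ch_G(X) ∪ Sib_G(X). -/

import Mathlib

/-- A directed acyclic graph on node set `V`: a directed edge relation with no
directed cycles (no edge `a → b` together with a directed path from `b` back to `a`). -/
structure Dag (V : Type*) where
  edge : V → V → Prop
  acyclic : ∀ a b : V, edge a b → ¬ Relation.ReflTransGen edge b a

variable {V : Type*}

namespace Dag

/-- `a` is an ancestor of `b` (equivalently, `b` is a descendant of `a`):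
there is a directed path from `a` to `b`; every node is its own ancestor. -/
def Anc (D : Dag V) (a b : V) : Prop := Relation.ReflTransGen D.edge a b

/-- `a` and `b` are adjacent (joined by an edge in either direction). -/
def Adj (D : Dag V) (a b : V) : Prop := D.edge a b ∨ D.edge b a

/-- The parents of `x` in the DAG `D`. -/
def Pa (D : Dag V) (x : V) : Set V := {a | D.edge a x}

/-- The Markov blanket of `x`: parents, children, and parents of children of `x`
(excluding `x` itself). -/
def MB (D : Dag V) (x : V) : Set V :=
  {v | v ≠ x ∧ (D.edge v x ∨ D.edge x v ∨ ∃ c : V, D.edge x c ∧ D.edge v c)}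

end Dag

/-- A path between `x` and `y` with respect to an adjacency relation `A`:
a sequence of distinct nodes, starting at `x` and ending at `y`, in which
consecutive nodes are adjacent. `n` is the number of edges of the path. -/
structure GPath (A : V → V → Prop) (x y : V) where
  n : ℕ
  f : Fin (n + 1) → V
  inj : Function.Injective f
  first : f ⟨0, by omega⟩ = x
  last : f ⟨n, by omega⟩ = y
  adj : ∀ i : Fin n, A (f i.castSucc) (f i.succ)

namespace GPath

/-- The non-endpoint node at position `i` of the path `p` is a collider with respect
to the directed edge relation `E`: both incident edges of the path point into it. -/
def ColliderAt {A : V → V → Prop} {x y : V} (p : GPath A x y)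
    (E : V → V → Prop) (i : ℕ) : Prop :=
  ∃ (_ : 0 < i) (_ : i < p.n),
    E (p.f ⟨i - 1, by omega⟩) (p.f ⟨i, by omega⟩) ∧
    E (p.f ⟨i + 1, by omega⟩) (p.f ⟨i, by omega⟩)

/-- The path `p` is blocked by the node set `S` in the DAG `D`: it contains a
non-collider that lies in `S`, or a collider such that neither the collider nor any
of its descendants lies in `S`. -/
def Blocked {A : V → V → Prop} {x y : V} (p : GPath A x y)
    (D : Dag V) (S : Set V) : Prop :=
  ∃ (i : ℕ) (_ : 0 < i) (_ : i < p.n),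
    (¬ p.ColliderAt D.edge i ∧ p.f ⟨i, by omega⟩ ∈ S) ∨
    (p.ColliderAt D.edge i ∧ ∀ d : V, D.Anc (p.f ⟨i, by omega⟩) d → d ∉ S)

end GPath

namespace Dag

/-- `x` and `y` are d-separated by `S` in the DAG `D`: every path between `x` and `y`
is blocked by `S`. -/
def dSep (D : Dag V) (x y : V) (S : Set V) : Prop :=
  ∀ p : GPath D.Adj x y, p.Blocked D S

/-- Two DAGs on the same node set are Markov equivalent if they have exactly the same
d-separation relations. -/
def MEquiv (D D' : Dag V) : Prop :=
  ∀ (x y : V) (S : Set V), D.dSep x y S ↔ D'.dSep x y S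

/-- The edge between `a` and `b` is directed `a → b` in the CPDAG of the Markov
equivalence class of `D`: the edge `a → b` holds in every DAG Markov equivalent to `D`. -/
def CpDir (D : Dag V) (a b : V) : Prop :=
  ∀ D' : Dag V, D.MEquiv D' → D'.edge a b

/-- The edge between `a` and `b` is undirected (`a − b`) in the CPDAG: `a` and `b` are
adjacent (the CPDAG has the same adjacencies as the DAGs of the MEC) but the edge is not
directed either way in the CPDAG. -/
def CpUndir (D : Dag V) (a b : V) : Prop :=
  D.Adj a b ∧ ¬ D.CpDir a b ∧ ¬ D.CpDir b a

/-- `Pa_G(a)`: the nodes with a directed edge into `a` in the CPDAG. -/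
def CpPa (D : Dag V) (a : V) : Set V := {p | D.CpDir p a}

/-- `Ch_G(a)`: the nodes `b` with the edge directed `a → b` in the CPDAG. -/
def CpCh (D : Dag V) (a : V) : Set V := {c | D.CpDir a c}

/-- `Sib_G(a)`: the nodes joined to `a` by an undirected edge in the CPDAG. -/
def CpSib (D : Dag V) (a : V) : Set V := {s | D.CpUndir a s}

end Dag

namespace GPath

/-- `p` is a possibly directed path in the CPDAG: no edge on it is directed
backwards (as `V_i ← V_{i+1}`) in the CPDAG. -/
def CpPossiblyDirected {D : Dag V} {x y : V} (p : GPath D.Adj x y) : Prop :=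
  ∀ i : Fin p.n, ¬ D.CpDir (p.f i.succ) (p.f i.castSucc)

/-- `p` is a (fully) directed path in the CPDAG: every edge on it is directed
forwards in the CPDAG. -/
def CpDirected {D : Dag V} {x y : V} (p : GPath D.Adj x y) : Prop :=
  ∀ i : Fin p.n, D.CpDir (p.f i.castSucc) (p.f i.succ)

/-- `p` is a directed path from `x` to `y` in the DAG `D` itself. -/
def DirectedIn {D : Dag V} {x y : V} (p : GPath D.Adj x y) : Prop :=
  ∀ i : Fin p.n, D.edge (p.f i.castSucc) (p.f i.succ)

/-- `p` is unshielded: for every three consecutive nodes on it, the first and the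
third are non-adjacent. -/
def Unshielded {D : Dag V} {x y : V} (p : GPath D.Adj x y) : Prop :=
  ∀ (i : ℕ) (_ : i + 2 ≤ p.n), ¬ D.Adj (p.f ⟨i, by omega⟩) (p.f ⟨i + 2, by omega⟩)

end GPath

namespace Dag

/-- `x` is a possible ancestor of `y` in the CPDAG: there is a possibly directed path
from `x` to `y`. -/
def PossAn (D : Dag V) (x y : V) : Prop :=
  ∃ p : GPath D.Adj x y, p.CpPossiblyDirected

/-- `x` is an explicit ancestor of `y` in the CPDAG: there is a fully directed path
from `x` to `y` in the CPDAG. -/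
def ExplAn (D : Dag V) (x y : V) : Prop :=
  ∃ p : GPath D.Adj x y, p.CpDirected

/-- The CPDAG is amenable relative to `(x, y)`: every possibly directed path from
`x` to `y` starts with a directed edge out of `x`. -/
def Amenable (D : Dag V) (x y : V) : Prop :=
  ∀ p : GPath D.Adj x y, p.CpPossiblyDirected →
    ∀ _ : 0 < p.n, D.CpDir (p.f ⟨0, by omega⟩) (p.f ⟨1, by omega⟩)

/-- `S` is a valid adjustment set for `(x, y)` in the DAG `D`:
(i) no element of `S` is a descendant of any node `w ≠ x` lying on a directed path
from `x` to `y`, and (ii) every path between `x` and `y` that is not a directed path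
from `x` to `y` is blocked by `S`. -/
def ValidAdjustment (D : Dag V) (x y : V) (S : Set V) : Prop :=
  (∀ s ∈ S, ∀ w : V, w ≠ x → D.Anc x w → D.Anc w y → ¬ D.Anc w s) ∧
  (∀ p : GPath D.Adj x y, ¬ p.DirectedIn → p.Blocked D S)

/-- `Cn_D(x, y)`: the nodes `w ≠ x` lying on some directed path from `x` to `y` in `D`. -/
def Cn (D : Dag V) (x y : V) : Set V := {w | w ≠ x ∧ D.Anc x w ∧ D.Anc w y}

end Dag

/-!
The directed edges of the CPDAG are the edges forced from the v-structures by Meek's orientation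
rules. If `a → b` is forced and `b − c` is not forced in either direction, then `a → c` is forced.
Hence the set of forced ancestors never shrinks along a possibly directed path from `X` to `Y`,
whereas a directed edge `Y → X` would put `Y` among the forced ancestors of `X`, and so among its
own, which acyclicity forbids.

That unforced edges can be reversed within the Markov equivalence class rests on two facts. The
unforced edges form a graph whose nodes can be ordered, starting from any prescribed one, so that
the earlier neighbours of each node form a clique; reorienting them along such an order creates no
directed cycle and no new v-structure. And DAGs with the same adjacencies and v-structures are
Markov equivalent: d-separation is separation in a moral graph, and a shortest path in the moral
graph of one DAG is also a path in that of the other.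
-/

theorem acyclic_of_lt {α : Type*} [Preorder α] {E : V → V → Prop} (k : V → α)
    (hk : ∀ a b, E a b → k a < k b) (a b : V) (hab : E a b) :
    ¬ Relation.ReflTransGen E b a := by
  intro hba
  have hle : k b ≤ k a := hba.head_induction_on le_rfl fun h _ ih ↦ (hk _ _ h).le.trans ih
  exact (hle.trans_lt (hk a b hab)).false

namespace Dag

section Basic

variable {D D' : Dag V} {a b c : V} {T : Set V}

theorem edge_asymm (h : D.edge a b) : ¬ D.edge b a :=
  fun h' ↦ D.acyclic a b h (.single h')

theorem Adj.symm (h : D.Adj a b) : D.Adj b a :=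
  Or.symm h

theorem Adj.ne (h : D.Adj a b) : a ≠ b := by
  rintro rfl
  exact h.elim (fun e ↦ edge_asymm e e) fun e ↦ edge_asymm e e

theorem edge_of_edge_of_edge_of_adj (hab : D.edge a b) (hbc : D.edge b c) (hac : D.Adj a c) :
    D.edge a c :=
  hac.resolve_right fun hca ↦ D.acyclic a b hab (.head hbc (.single hca))

/-- The nodes with a descendant in `T`. -/
def ancestors (D : Dag V) (T : Set V) : Set V :=
  {v | ∃ t ∈ T, D.Anc v t}

theorem mem_ancestors_of_mem (h : a ∈ T) : a ∈ D.ancestors T :=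
  ⟨a, h, .refl⟩

theorem mem_ancestors_of_edge (h : D.edge a b) (hb : b ∈ D.ancestors T) : a ∈ D.ancestors T :=
  let ⟨t, ht, hbt⟩ := hb
  ⟨t, ht, .head h hbt⟩

theorem ancestors_mono {T' : Set V} (h : T ⊆ T') : D.ancestors T ⊆ D.ancestors T' :=
  fun _ ⟨t, ht, hvt⟩ ↦ ⟨t, h ht, hvt⟩

/-- Equality of the adjacencies and of the v-structures of two DAGs, where a v-structure is a
collider `a → b ← c` with `a` and `c` distinct and non-adjacent. -/
structure StructEquiv (D D' : Dag V) : Prop where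
  adj_iff (a b : V) : D.Adj a b ↔ D'.Adj a b
  collider_iff (a b c : V) : a ≠ c → ¬ D.Adj a c →
    (D.edge a b ∧ D.edge c b ↔ D'.edge a b ∧ D'.edge c b)

theorem StructEquiv.symm (h : D.StructEquiv D') : D'.StructEquiv D where
  adj_iff a b := (h.adj_iff a b).symm
  collider_iff a b c hac hadj := (h.collider_iff a b c hac (mt (h.adj_iff a c).1 hadj)).symm

end Basic

/-! ### Forced and free edges -/

/-- The edges of `D` whose orientation is forced by the v-structures through Meek's orientation
rules: the edges of v-structures, edges avoiding a new v-structure (`chain`), edges avoiding a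
directed triangle (`triangle`), and edges `a → b` whose reversal would, by `triangle`, create a
v-structure at `a` (`kite`). -/
inductive Forced (D : Dag V) : V → V → Prop
  | vstructure {a b c : V} : D.edge a b → D.edge c b → a ≠ c → ¬ D.Adj a c → Forced D a b
  | chain {a b c : V} : Forced D a b → D.edge b c → ¬ D.Adj a c → Forced D b c
  | triangle {a d b : V} : Forced D a d → Forced D d b → D.edge a b → Forced D a b
  | kite {a e f b : V} : Forced D e b → Forced D f b → e ≠ f → ¬ D.Adj e f → D.Adj a e →
      D.Adj a f → ¬ (D.edge e a ∧ D.edge f a) → D.edge a b → Forced D a b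

/-- Adjacency along an edge whose orientation is not forced, that is, along what will turn out to
be an undirected edge of the CPDAG. -/
def Free (D : Dag V) (a b : V) : Prop :=
  D.Adj a b ∧ ¬ D.Forced a b ∧ ¬ D.Forced b a

section Forced

variable {D D' : Dag V} {a b c d : V}

theorem Forced.edge (h : D.Forced a b) : D.edge a b := by
  cases h <;> assumption

theorem Forced.edge_of_structEquiv (hs : D.StructEquiv D') (h : D.Forced a b) : D'.edge a b := by
  induction h with
  | @vstructure a b c hab hcb hne hnac => exact ((hs.collider_iff a b c hne hnac).1 ⟨hab, hcb⟩).1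
  | @chain a b c hab hbc hnac hab' =>
    refine ((hs.adj_iff b c).1 (.inl hbc)).resolve_right fun hcb' ↦ ?_
    have hne : a ≠ c := by
      rintro rfl
      exact edge_asymm hab.edge hbc
    exact edge_asymm hbc ((hs.collider_iff a b c hne hnac).2 ⟨hab', hcb'⟩).2
  | triangle _ _ hab had' hdb' =>
    exact edge_of_edge_of_edge_of_adj had' hdb' ((hs.adj_iff _ _).1 (.inl hab))
  | @kite a e f b _ _ hne hnef hae haf hncol hab heb' hfb' =>
    refine ((hs.adj_iff a b).1 (.inl hab)).resolve_right fun hba' ↦ hncol ?_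
    exact (hs.collider_iff e a f hne hnef).2
      ⟨edge_of_edge_of_edge_of_adj heb' hba' ((hs.adj_iff _ _).1 hae.symm),
        edge_of_edge_of_edge_of_adj hfb' hba' ((hs.adj_iff _ _).1 haf.symm)⟩

theorem Free.symm (h : D.Free a b) : D.Free b a :=
  ⟨h.1.symm, h.2.2, h.2.1⟩

theorem forced_or_forced_or_free (h : D.Adj a b) : D.Forced a b ∨ D.Forced b a ∨ D.Free a b := by
  by_cases hab : D.Forced a b
  · exact .inl hab
  · by_cases hba : D.Forced b a
    · exact .inr (.inl hba)
    · exact .inr (.inr ⟨h, hab, hba⟩)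

theorem Forced.adj_of_free (hab : D.Forced a b) (hbc : D.Free b c) : D.Adj a c := by
  by_contra hac
  rcases hbc.1 with ebc | ecb
  · exact hbc.2.1 (.chain hab ebc hac)
  · have hca : c ≠ a := by
      rintro rfl
      exact hbc.2.2 hab
    exact hbc.2.2 (.vstructure ecb hab.edge hca fun h ↦ hac h.symm)

theorem Forced.forced_or_free (hab : D.Forced a b) (hbc : D.Free b c) :
    D.Forced a c ∨ D.Free a c := by
  rcases forced_or_forced_or_free (hab.adj_of_free hbc) with hac | hca | hac
  · exact .inl hac
  · rcases hbc.1 with ebc | ecb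
    · exact (D.acyclic a b hab.edge (.head ebc (.single hca.edge))).elim
    · exact (hbc.2.2 (.triangle hca hab ecb)).elim
  · exact .inr hac

theorem Forced.trans_free_of_vstructure (hab : D.edge a b) (hdb : D.edge d b) (hne : a ≠ d)
    (hnad : ¬ D.Adj a d) (hbc : D.Free b c) : D.Forced a c := by
  by_contra hac
  have fab : D.Forced a b := .vstructure hab hdb hne hnad
  have fdb : D.Forced d b := .vstructure hdb hab hne.symm fun h ↦ hnad h.symm
  have adj_ac := fab.adj_of_free hbc
  have adj_dc := fdb.adj_of_free hbc
  have hncol : ¬ (D.edge a c ∧ D.edge d c) := fun ⟨h₁, h₂⟩ ↦ hac (.vstructure h₁ h₂ hne hnad)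
  rcases hbc.1 with ebc | ecb
  · exact hncol ⟨edge_of_edge_of_edge_of_adj hab ebc adj_ac,
      edge_of_edge_of_edge_of_adj hdb ebc adj_dc⟩
  · exact hbc.2.2 (.kite fab fdb hne hnad adj_ac.symm adj_dc.symm hncol ecb)

theorem Forced.trans_free (hab : D.Forced a b) (hbc : D.Free b c) : D.Forced a c := by
  induction hab generalizing c with
  | vstructure hab hdb hne hnad => exact trans_free_of_vstructure hab hdb hne hnad hbc
  | @chain d a b hda hab hndb ih =>
    refine ((hda.chain hab hndb).forced_or_free hbc).resolve_right fun hac ↦ ?_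
    have hdc : D.Forced d c := ih hac
    rcases hbc.1 with ebc | ecb
    · have hbd : b ≠ d := by
        rintro rfl
        exact edge_asymm hda.edge hab
      exact hbc.2.1 (.vstructure ebc hdc.edge hbd fun h ↦ hndb h.symm)
    · exact hbc.2.2 (.chain hdc ecb hndb)
  | triangle had hdb hab _ ih =>
    have hdc : D.Forced _ c := ih hbc
    exact .triangle had hdc <|
      edge_of_edge_of_edge_of_adj had.edge hdc.edge ((had.triangle hdb hab).adj_of_free hbc)
  | @kite a e f b heb hfb hne hnef hae haf hncol hab ihe ihf =>
    have hec : D.Forced e c := ihe hbc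
    have hfc : D.Forced f c := ihf hbc
    have hac : D.Adj a c := (heb.kite hfb hne hnef hae haf hncol hab).adj_of_free hbc
    refine .kite hec hfc hne hnef hae haf hncol (hac.resolve_right fun hca ↦ hncol ?_)
    exact ⟨edge_of_edge_of_edge_of_adj hec.edge hca hae.symm,
      edge_of_edge_of_edge_of_adj hfc.edge hca haf.symm⟩

/-- The nodes with a nonempty path of forced edges into `x`. In the inclusion order this set
strictly increases along forced edges and is constant along free ones. -/
def forcedAncestors (D : Dag V) (x : V) : Set V :=
  {z | Relation.TransGen D.Forced z x}

theorem notMem_forcedAncestors_self (D : Dag V) (x : V) : x ∉ D.forcedAncestors x := by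
  intro h
  obtain ⟨y, hxy, hyx⟩ := Relation.TransGen.head'_iff.1 h
  exact D.acyclic x y hxy.edge (hyx.lift id fun _ _ ↦ Forced.edge)

theorem forcedAncestors_ssubset_of_forced (h : D.Forced a b) :
    D.forcedAncestors a ⊂ D.forcedAncestors b :=
  Set.ssubset_iff_of_subset (fun _ hz ↦ hz.tail h) |>.2
    ⟨a, .single h, D.notMem_forcedAncestors_self a⟩

theorem forcedAncestors_subset_of_free (h : D.Free a b) :
    D.forcedAncestors a ⊆ D.forcedAncestors b := by
  intro z hz
  obtain ⟨w, hzw, hwa⟩ := Relation.TransGen.tail'_iff.1 hz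
  exact .tail' hzw (hwa.trans_free h)

theorem forcedAncestors_eq_of_free (h : D.Free a b) :
    D.forcedAncestors a = D.forcedAncestors b :=
  (forcedAncestors_subset_of_free h).antisymm (forcedAncestors_subset_of_free h.symm)

theorem forcedAncestors_subset_of_adj (h : D.Adj a b) (hba : ¬ D.Forced b a) :
    D.forcedAncestors a ⊆ D.forcedAncestors b := by
  rcases forced_or_forced_or_free h with hab | hba' | hab
  · exact (forcedAncestors_ssubset_of_forced hab).subset
  · exact (hba hba').elim
  · exact forcedAncestors_subset_of_free hab

end Forced

end Dag

/-! ### Perfect rankings of a graph -/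

/-- A ranking `r` that orders `s` so that the neighbours of each `w ∈ s` preceding it form a
clique of `H` (the reverse of a perfect elimination ordering). Ties are allowed between
non-adjacent nodes. -/
structure IsPerfectRanking (H : SimpleGraph V) (s : Finset V) (r : V → ℕ) : Prop where
  ne_of_adj {u v : V} : u ∈ s → v ∈ s → H.Adj u v → r u ≠ r v
  adj_of_lt {u v w : V} : u ∈ s → v ∈ s → w ∈ s → H.Adj u w → H.Adj v w → r u < r w → r v < r w →
    u ≠ v → H.Adj u v

section PerfectRanking

variable {H : SimpleGraph V} {s : Finset V} {r : V → ℕ} {v : V} {K : Set V}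

theorem IsPerfectRanking.mono {t : Finset V} (hr : IsPerfectRanking H t r) (hst : s ⊆ t) :
    IsPerfectRanking H s r where
  ne_of_adj hu hv := hr.ne_of_adj (hst hu) (hst hv)
  adj_of_lt hu hv hw := hr.adj_of_lt (hst hu) (hst hv) (hst hw)

theorem IsPerfectRanking.exists_insert_last [DecidableEq V] (hr : IsPerfectRanking H s r)
    (hv : v ∉ s) (hclique : H.IsClique {u | u ∈ s ∧ H.Adj u v}) :
    ∃ r', IsPerfectRanking H (insert v s) r' ∧ (∀ u ∈ s, r' u = r u) ∧ ∀ u ∈ s, r' u < r' v := by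
  let r' := Function.update r v (s.sup r + 1)
  have eq_of_mem : ∀ u ∈ s, r' u = r u := fun u hu ↦
    Function.update_of_ne (ne_of_mem_of_not_mem hu hv) _ _
  have hlast : ∀ u ∈ s, r' u < r' v := fun u hu ↦ by
    rw [eq_of_mem u hu, show r' v = s.sup r + 1 from Function.update_self ..]
    exact Nat.lt_succ_of_le (s.le_sup hu)
  refine ⟨r', ⟨fun {u w} hu hw huw ↦ ?_, fun {u x w} hu hx hw huw hxw hlt hlt' hux ↦ ?_⟩,
    eq_of_mem, hlast⟩
  · rcases Finset.mem_insert.1 hu with rfl | hus <;> rcases Finset.mem_insert.1 hw with rfl | hws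
    · exact (H.irrefl huw).elim
    · exact (hlast w hws).ne'
    · exact (hlast u hus).ne
    · rw [eq_of_mem u hus, eq_of_mem w hws]
      exact hr.ne_of_adj hus hws huw
  · have mem_of_lt : ∀ z ∈ insert v s, r' z < r' w → z ∈ s := by
      refine fun z hz hzw ↦ Finset.mem_of_mem_insert_of_ne hz ?_
      rintro rfl
      rcases Finset.mem_insert.1 hw with rfl | hws
      · exact hzw.false
      · exact (hlast w hws).not_gt hzw
    have hus := mem_of_lt u hu hlt
    have hxs := mem_of_lt x hx hlt'
    rcases Finset.mem_insert.1 hw with rfl | hws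
    · exact hclique ⟨hus, huw⟩ ⟨hxs, hxw⟩ hux
    · rw [eq_of_mem u hus, eq_of_mem w hws] at hlt
      rw [eq_of_mem x hxs, eq_of_mem w hws] at hlt'
      exact hr.adj_of_lt hus hxs hws huw hxw hlt hlt' hux

theorem IsPerfectRanking.exists_first_of_subset_clique (hr : IsPerfectRanking H s r) {C : Set V}
    (hC : H.IsClique C) (hlt : ∀ u ∈ s, u ∈ C → ∀ w ∈ s, w ∉ C → H.Adj u w → r u < r w)
    (hKC : K ⊆ C) :
    ∃ r', IsPerfectRanking H s r' ∧ ∀ u ∈ s, u ∈ K → ∀ w ∈ s, w ∉ K → r' u < r' w := by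
  classical
  let r' : V → ℕ := fun u ↦ if u ∈ K then r u else r u + (s.sup r + 1)
  have hin : ∀ u ∈ K, r' u = r u := fun u hu ↦ if_pos hu
  have hout : ∀ u ∉ K, r' u = r u + (s.sup r + 1) := fun u hu ↦ if_neg hu
  have hfirst : ∀ u ∈ s, u ∈ K → ∀ w ∈ s, w ∉ K → r' u < r' w := fun u hu huK w _ hwK ↦ by
    rw [hin u huK, hout w hwK]
    exact Nat.lt_add_left (r w) (Nat.lt_succ_of_le (s.le_sup hu))
  refine ⟨r', ⟨fun {u w} hu hw huw ↦ ?_, fun {u x w} hu hx hw huw hxw huw' hxw' hux ↦ ?_⟩, hfirst⟩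
  · have hne := hr.ne_of_adj hu hw huw
    by_cases huK : u ∈ K <;> by_cases hwK : w ∈ K
    · rwa [hin u huK, hin w hwK]
    · exact (hfirst u hu huK w hw hwK).ne
    · exact (hfirst w hw hwK u hu huK).ne'
    · rwa [hout u huK, hout w hwK, Ne, Nat.add_right_cancel_iff]
  · by_cases hwC : w ∈ C
    · have mem_clique : ∀ z ∈ s, H.Adj z w → r' z < r' w → z ∈ C := by
        intro z hz hzw hzw'
        by_contra hzC
        have := hlt w hw hwC z hz hzC hzw.symm
        grind
      exact hC (mem_clique u hu huw huw') (mem_clique x hx hxw hxw') hux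
    · have lt_of_lt : ∀ z ∈ s, H.Adj z w → r' z < r' w → r z < r w := by
        intro z hz hzw hzw'
        by_cases hzC : z ∈ C
        · exact hlt z hz hzC w hw hwC hzw
        · rw [hout z fun h ↦ hzC (hKC h), hout w fun h ↦ hwC (hKC h)] at hzw'
          exact Nat.lt_of_add_lt_add_right hzw'
      exact hr.adj_of_lt hu hx hw huw hxw (lt_of_lt u hu huw huw') (lt_of_lt x hx hxw hxw') hux

theorem IsPerfectRanking.exists_insert_first [DecidableEq V] (hr : IsPerfectRanking H s r)
    (hv : v ∉ s) (hclique : H.IsClique {u | u ∈ s ∧ H.Adj u v})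
    (hfirst : ∀ u ∈ s, H.Adj u v → ∀ w ∈ s, ¬ H.Adj w v → r u < r w)
    (hK : K ⊆ insert v {u | u ∈ s ∧ H.Adj u v}) :
    ∃ r', IsPerfectRanking H (insert v s) r' ∧
      ∀ u ∈ insert v s, u ∈ K → ∀ w ∈ insert v s, w ∉ K → r' u < r' w := by
  obtain ⟨r₁, hr₁, heq, -⟩ := hr.exists_insert_last hv hclique
  have hC : H.IsClique (insert v {u | u ∈ s ∧ H.Adj u v}) :=
    hclique.insert fun u hu _ ↦ hu.2.symm
  refine hr₁.exists_first_of_subset_clique hC (fun u _ huC w hw hwC huw ↦ ?_) hK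
  have hwv : w ≠ v := by
    rintro rfl
    exact hwC (.inl rfl)
  have hws : w ∈ s := Finset.mem_of_mem_insert_of_ne hw hwv
  have huv : u ≠ v := by
    rintro rfl
    exact hwC (.inr ⟨hws, huw.symm⟩)
  have hu : u ∈ s ∧ H.Adj u v := huC.resolve_left huv
  rw [heq u hu.1, heq w hws]
  exact hfirst u hu.1 hu.2 w hws fun hwv ↦ hwC (.inr ⟨hws, hwv⟩)

theorem IsPerfectRanking.exists_first (hr : IsPerfectRanking H s r) (hK : H.IsClique K)
    (hKs : K ⊆ s) :
    ∃ r', IsPerfectRanking H s r' ∧ ∀ u ∈ K, ∀ w ∈ s, w ∉ K → r' u < r' w := by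
  classical
  induction s using Finset.induction_on_max_value r generalizing K with
  | empty => exact ⟨r, hr, by simp⟩
  | insert v s hv hmax ih =>
    have hrs := hr.mono (Finset.subset_insert v s)
    have lt_of_adj : ∀ u ∈ s, H.Adj u v → r u < r v := fun u hu huv ↦
      (hmax u hu).lt_of_ne (hr.ne_of_adj (by simp [hu]) (by simp) huv)
    have hclique : H.IsClique {u | u ∈ s ∧ H.Adj u v} := fun u hu w hw huw ↦
      hr.adj_of_lt (by simp [hu.1]) (by simp [hw.1]) (by simp) hu.2 hw.2
        (lt_of_adj u hu.1 hu.2) (lt_of_adj w hw.1 hw.2) huw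
    by_cases hvK : v ∈ K
    · obtain ⟨r₁, hr₁, hfirst⟩ := ih hrs hclique fun u hu ↦ hu.1
      obtain ⟨r₂, hr₂, hfirst₂⟩ := hr₁.exists_insert_first (K := K) hv hclique
        (fun u hu huv w hw hwv ↦ hfirst u ⟨hu, huv⟩ w hw fun h ↦ hwv h.2) fun u hu ↦ by
          by_cases huv : u = v
          · exact .inl huv
          · exact .inr ⟨Finset.mem_of_mem_insert_of_ne (hKs hu) huv, hK hu hvK huv⟩
      exact ⟨r₂, hr₂, fun u hu ↦ hfirst₂ u (hKs hu) hu⟩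
    · have hKs' : K ⊆ s := fun u hu ↦
        Finset.mem_of_mem_insert_of_ne (hKs hu) (ne_of_mem_of_not_mem hu hvK)
      obtain ⟨r₁, hr₁, hfirst⟩ := ih hrs hK hKs'
      obtain ⟨r₂, hr₂, heq, hlast⟩ := hr₁.exists_insert_last hv hclique
      refine ⟨r₂, hr₂, fun u hu w hw hwK ↦ ?_⟩
      rcases Finset.mem_insert.1 hw with rfl | hws
      · exact hlast u (hKs' hu)
      · rw [heq u (hKs' hu), heq w hws]
        exact hfirst u hu w hws hwK

end PerfectRanking

namespace Dag

/-! ### Reorienting the free edges -/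

section Reorient

variable {D : Dag V} {a b : V}

/-- The undirected graph formed by the free edges of `D`. -/
def freeGraph (D : Dag V) : SimpleGraph V where
  Adj := D.Free
  symm := ⟨fun _ _ ↦ Free.symm⟩
  loopless := ⟨fun _ h ↦ h.1.ne rfl⟩

theorem exists_topologicalRanking [Finite V] (D : Dag V) :
    ∃ r : V → ℕ, ∀ a b, D.edge a b → r a < r b := by
  refine ⟨fun v ↦ {u | D.Anc u v}.ncard, fun a b hab ↦ Set.ncard_lt_ncard ?_⟩
  exact Set.ssubset_iff_of_subset (fun _ hua ↦ hua.tail hab) |>.2 ⟨b, .refl, D.acyclic a b hab⟩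

theorem isPerfectRanking_freeGraph {r : V → ℕ} (hr : ∀ a b, D.edge a b → r a < r b)
    (s : Finset V) : IsPerfectRanking D.freeGraph s r where
  ne_of_adj _ _ h := h.1.elim (fun e ↦ (hr _ _ e).ne) fun e ↦ (hr _ _ e).ne'
  adj_of_lt {u v w} _ _ _ huw hvw hlt_u hlt_v huv := by
    have euw : D.edge u w := huw.1.resolve_right fun e ↦ (hr _ _ e).not_gt hlt_u
    have evw : D.edge v w := hvw.1.resolve_right fun e ↦ (hr _ _ e).not_gt hlt_v
    refine ⟨?_, fun h ↦ huw.2.1 (h.trans_free hvw), fun h ↦ hvw.2.1 (h.trans_free huw)⟩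
    by_contra hnuv
    exact huw.2.1 (.vstructure euw evw huv hnuv)

/-- The DAG obtained from `D` by keeping its forced edges and orienting its free edges along the
ranking `r`. -/
def reorient (D : Dag V) (r : V → ℕ) : Dag V where
  edge a b := D.Forced a b ∨ (D.Free a b ∧ r a < r b)
  acyclic := acyclic_of_lt (fun v ↦ toLex (D.forcedAncestors v, r v)) fun a b h ↦ by
    rw [Prod.Lex.toLex_lt_toLex]
    rcases h with hab | ⟨hab, hlt⟩
    · exact .inl (forcedAncestors_ssubset_of_forced hab)
    · exact .inr ⟨forcedAncestors_eq_of_free hab, hlt⟩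

theorem structEquiv_reorient [Fintype V] {r : V → ℕ}
    (hr : IsPerfectRanking D.freeGraph Finset.univ r) : D.StructEquiv (D.reorient r) where
  adj_iff a b := by
    constructor
    · intro hab
      rcases forced_or_forced_or_free hab with hab | hba | hab
      · exact .inl (.inl hab)
      · exact .inr (.inl hba)
      · rcases (hr.ne_of_adj (Finset.mem_univ a) (Finset.mem_univ b) hab).lt_or_gt with hlt | hlt
        · exact .inl (.inr ⟨hab, hlt⟩)
        · exact .inr (.inr ⟨hab.symm, hlt⟩)
    · rintro ((hab | ⟨hab, -⟩) | (hba | ⟨hba, -⟩))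
      · exact .inl hab.edge
      · exact hab.1
      · exact .inr hba.edge
      · exact hba.1.symm
  collider_iff a b c hac hnac := by
    constructor
    · rintro ⟨hab, hcb⟩
      exact ⟨.inl (.vstructure hab hcb hac hnac),
        .inl (.vstructure hcb hab hac.symm fun h ↦ hnac h.symm)⟩
    · rintro ⟨hab | ⟨hab, hlt⟩, hcb | ⟨hcb, hlt'⟩⟩
      · exact ⟨hab.edge, hcb.edge⟩
      · exact (hnac (hab.adj_of_free hcb.symm)).elim
      · exact (hnac (hcb.adj_of_free hab.symm).symm).elim
      · have := hr.adj_of_lt (Finset.mem_univ a) (Finset.mem_univ c) (Finset.mem_univ b)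
          hab hcb hlt hlt' hac
        exact (hnac this.1).elim

theorem exists_structEquiv_not_edge [Finite V] (h : ¬ D.Forced a b) :
    ∃ D' : Dag V, D.StructEquiv D' ∧ ¬ D'.edge a b := by
  have := Fintype.ofFinite V
  obtain ⟨r, hr⟩ := D.exists_topologicalRanking
  obtain ⟨r', hr', hfirst⟩ := (isPerfectRanking_freeGraph hr Finset.univ).exists_first
    (SimpleGraph.isClique_singleton b) (by simp)
  refine ⟨D.reorient r', structEquiv_reorient hr', ?_⟩
  rintro (hab | ⟨hab, hlt⟩)
  · exact h hab
  · exact (hfirst b rfl a (Finset.mem_univ a) hab.1.ne).not_gt hlt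

end Reorient

/-! ### Open walks -/

/-- The condition that the middle node of three consecutive nodes `u`, `v`, `w` of a walk does not
block the walk, given `S`. -/
def OpenAt (D : Dag V) (S : Set V) (u v w : V) : Prop :=
  (D.edge u v ∧ D.edge w v → v ∈ D.ancestors S) ∧ (¬ (D.edge u v ∧ D.edge w v) → v ∉ S)

/-- The nodes `f 0, …, f n` form a walk that no interior node blocks given `S`. Nodes may repeat;
values of `f` beyond `n` are irrelevant. -/
structure IsOpenWalk (D : Dag V) (S : Set V) (n : ℕ) (f : ℕ → V) : Prop where
  adj (i : ℕ) : i < n → D.Adj (f i) (f (i + 1))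
  openAt (i : ℕ) : i + 2 ≤ n → D.OpenAt S (f i) (f (i + 1)) (f (i + 2))

/-- The existence of an open walk from `x` to `y` given `S`, which is the negation of
d-separation (`not_dSep_iff_dConnected`). -/
def DConnected (D : Dag V) (S : Set V) (x y : V) : Prop :=
  ∃ n f, D.IsOpenWalk S n f ∧ f 0 = x ∧ f n = y

section OpenWalk

variable {D : Dag V} {S T : Set V} {x y u v w : V} {n : ℕ} {f : ℕ → V}

theorem mem_ancestors_of_forall_collider (h₀ : f 0 ∈ D.ancestors T) (hn : f n ∈ D.ancestors T)
    (hstep : ∀ i < n, D.Adj (f i) (f (i + 1)) ∨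
      f i ∈ D.ancestors T ∧ f (i + 1) ∈ D.ancestors T)
    (hcollider : ∀ i, i + 2 ≤ n → D.edge (f i) (f (i + 1)) → D.edge (f (i + 2)) (f (i + 1)) →
      f (i + 1) ∈ D.ancestors T)
    {i : ℕ} (hi : i ≤ n) : f i ∈ D.ancestors T := by
  have forward : ∀ k i, i + 1 + k = n → D.edge (f i) (f (i + 1)) → f (i + 1) ∈ D.ancestors T := by
    intro k
    induction k with
    | zero =>
      rintro i rfl -
      exact hn
    | succ k ih =>
      intro i hik hedge
      rcases hstep (i + 1) (by omega) with (hout | hin) | ⟨hmem, -⟩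
      · exact mem_ancestors_of_edge hout (ih (i + 1) (by omega) hout)
      · exact hcollider i (by omega) hedge hin
      · exact hmem
  induction i with
  | zero => exact h₀
  | succ i ih =>
    rcases hstep i hi with (hout | hin) | ⟨-, hmem⟩
    · exact forward (n - (i + 1)) i (by omega) hout
    · exact mem_ancestors_of_edge hin (ih (by omega))
    · exact hmem

theorem IsOpenWalk.mem_ancestors (hf : D.IsOpenWalk S n f) {i : ℕ} (hi : i ≤ n) :
    f i ∈ D.ancestors ({f 0, f n} ∪ S) :=
  mem_ancestors_of_forall_collider (mem_ancestors_of_mem (by simp))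
    (mem_ancestors_of_mem (by simp)) (fun i hi ↦ .inl (hf.adj i hi))
    (fun i hi h h' ↦ ancestors_mono Set.subset_union_right ((hf.openAt i hi).1 ⟨h, h'⟩)) hi

theorem IsOpenWalk.shift {i : ℕ} (hf : D.IsOpenWalk S (i + n) f) :
    D.IsOpenWalk S n fun k ↦ f (i + k) where
  adj k hk := hf.adj (i + k) (by omega)
  openAt k hk := hf.openAt (i + k) (by omega)

theorem IsOpenWalk.of_le {m : ℕ} (hf : D.IsOpenWalk S n f) (hmn : m ≤ n) : D.IsOpenWalk S m f where
  adj i hi := hf.adj i (by omega)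
  openAt i hi := hf.openAt i (by omega)

/-- The case to watch is a new collider whose excised loop starts with an edge out of it: the loop
cannot be directed all the way round, and so it turns around at a descendant of the node that is an
ancestor of `S`. -/
theorem IsOpenWalk.openAt_of_eq {i d : ℕ} (hf : D.IsOpenWalk S (i + d + 2) f)
    (hd : 0 < d) (heq : f (i + 1) = f (i + 1 + d)) :
    D.OpenAt S (f i) (f (i + 1)) (f (i + 1 + d + 1)) := by
  have hfst : D.OpenAt S (f i) (f (i + 1)) (f (i + 2)) := hf.openAt i (by omega)
  obtain ⟨d, rfl⟩ := Nat.exists_eq_succ_of_ne_zero hd.ne'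
  have hsnd : D.OpenAt S (f (i + 1 + d)) (f (i + 1)) (f (i + 1 + (d + 1) + 1)) := by
    rw [heq]
    exact hf.openAt (i + 1 + d) (by omega)
  refine ⟨fun ⟨hin, _⟩ ↦ ?_, fun hncol hS ↦ ?_⟩
  · rcases hf.adj (i + 1) (by omega) with hout | hback
    · obtain ⟨t, ht, hanc⟩ := (hf.of_le (m := i + 1 + (d + 1)) (by omega)).shift.mem_ancestors
        (show 1 ≤ d + 1 by omega)
      rcases ht with ht | ht
      · have : t = f (i + 1) := by
          rcases ht with ht | ht
          · exact ht
          · exact ht.trans heq.symm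
        exact (D.acyclic _ _ hout (this ▸ hanc)).elim
      · exact mem_ancestors_of_edge hout ⟨t, ht, hanc⟩
    · exact hfst.1 ⟨hin, hback⟩
  · by_cases hin : D.edge (f i) (f (i + 1))
    · exact hsnd.2 (fun h ↦ hncol ⟨hin, h.2⟩) hS
    · exact hfst.2 (fun h ↦ hin h.1) hS

theorem IsOpenWalk.excise {i d : ℕ} (hf : D.IsOpenWalk S (n + d) f) (hi : i ≤ n) (hd : 0 < d)
    (heq : f i = f (i + d)) : D.IsOpenWalk S n fun k ↦ if k ≤ i then f k else f (k + d) where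
  adj k hk := by
    rcases lt_trichotomy k i with hlt | rfl | hlt
    · simpa only [hlt.le, Nat.succ_le_of_lt hlt, if_true] using hf.adj k (by omega)
    · simpa only [le_rfl, Nat.not_succ_le_self, if_true, if_false, heq, Nat.add_right_comm]
        using hf.adj (k + d) (by omega)
    · simpa only [show ¬ k ≤ i by omega, show ¬ k + 1 ≤ i by omega, if_false, Nat.add_right_comm]
        using hf.adj (k + d) (by omega)
  openAt k hk := by
    rcases lt_trichotomy (k + 1) i with hlt | rfl | hlt
    · simpa only [show k ≤ i by omega, show k + 1 ≤ i by omega, show k + 2 ≤ i by omega, if_true]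
        using hf.openAt k (by omega)
    · simpa only [show k ≤ k + 1 by omega, show ¬ k + 2 ≤ k + 1 by omega, le_rfl, if_true,
        if_false, Nat.add_right_comm] using (hf.of_le (by omega)).openAt_of_eq hd heq
    · have hfst : (if k ≤ i then f k else f (k + d)) = f (k + d) := by
        split_ifs
        · rw [show k = i by omega, heq]
        · rfl
      simpa only [hfst, show ¬ k + 1 ≤ i by omega, show ¬ k + 2 ≤ i by omega, if_false,
        Nat.add_right_comm] using hf.openAt (k + d) (by omega)

theorem IsOpenWalk.exists_shorter {i j : ℕ} (hf : D.IsOpenWalk S n f) (hij : i < j) (hj : j ≤ n)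
    (heq : f i = f j) : ∃ m < n, ∃ g, D.IsOpenWalk S m g ∧ g 0 = f 0 ∧ g m = f n := by
  obtain ⟨d, rfl⟩ := Nat.exists_eq_add_of_lt hij
  obtain ⟨l, rfl⟩ := Nat.exists_eq_add_of_le hj
  rw [show i + d + 1 + l = i + l + (d + 1) by omega] at hf ⊢
  refine ⟨i + l, by omega, _, hf.excise (Nat.le_add_right i l) d.succ_pos heq, by simp, ?_⟩
  rcases l.eq_zero_or_pos with rfl | hl
  · simpa [← add_assoc] using heq
  · simp [hl.ne']

theorem DConnected.exists_injOn (h : D.DConnected S x y) :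
    ∃ n f, D.IsOpenWalk S n f ∧ f 0 = x ∧ f n = y ∧ Set.InjOn f (Set.Iic n) := by
  classical
  obtain ⟨f, hf, rfl, hn⟩ := Nat.find_spec h
  have not_eq : ∀ i j, i < j → j ≤ Nat.find h → f i ≠ f j := by
    intro i j hij hj heq
    obtain ⟨m, hm, g, hg, hg₀, hgm⟩ := hf.exists_shorter hij hj heq
    exact Nat.find_min h hm ⟨g, hg, hg₀, hgm.trans hn⟩
  refine ⟨_, f, hf, rfl, hn, fun i hi j hj heq ↦ ?_⟩
  rcases lt_trichotomy i j with hij | hij | hij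
  · exact (not_eq i j hij hj heq).elim
  · exact hij
  · exact (not_eq j i hij hi heq.symm).elim

theorem OpenAt.symm (h : D.OpenAt S u v w) : D.OpenAt S w v u :=
  ⟨fun e ↦ h.1 e.symm, fun e ↦ h.2 (mt And.symm e)⟩

theorem IsOpenWalk.reverse (hf : D.IsOpenWalk S n f) : D.IsOpenWalk S n fun i ↦ f (n - i) where
  adj i hi := by
    have := hf.adj (n - (i + 1)) (by omega)
    rw [show n - (i + 1) + 1 = n - i by omega] at this
    exact this.symm
  openAt i hi := by
    have := hf.openAt (n - (i + 2)) (by omega)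
    rw [show n - (i + 2) + 1 = n - (i + 1) by omega, show n - (i + 2) + 2 = n - i by omega] at this
    exact this.symm

theorem DConnected.symm (h : D.DConnected S x y) : D.DConnected S y x :=
  let ⟨n, _, hf, h₀, hn⟩ := h
  ⟨n, _, hf.reverse, hn, by rwa [Nat.sub_self]⟩

theorem isOpenWalk_zero (D : Dag V) (S : Set V) (f : ℕ → V) : D.IsOpenWalk S 0 f :=
  ⟨fun _ hi ↦ by omega, fun _ hi ↦ by omega⟩

theorem IsOpenWalk.exists_extend (hf : D.IsOpenWalk S n f) (hadj : D.Adj (f n) v)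
    (hopen : ∀ k, n = k + 1 → D.OpenAt S (f k) (f n) v) :
    ∃ g, D.IsOpenWalk S (n + 1) g ∧ (∀ i ≤ n, g i = f i) ∧ g (n + 1) = v := by
  let g : ℕ → V := Function.update f (n + 1) v
  have eq_of_le : ∀ i ≤ n, g i = f i := fun i hi ↦ Function.update_of_ne (by omega) _ _
  have hv : g (n + 1) = v := Function.update_self _ _ _
  refine ⟨g, ⟨fun i hi ↦ ?_, fun i hi ↦ ?_⟩, eq_of_le, hv⟩
  · rcases (Nat.le_of_lt_succ hi).eq_or_lt with rfl | hlt
    · rwa [eq_of_le i le_rfl, hv]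
    · rw [eq_of_le i hlt.le, eq_of_le (i + 1) hlt]
      exact hf.adj i hlt
  · rcases (Nat.le_of_succ_le_succ hi).eq_or_lt with rfl | hlt
    · rw [eq_of_le i (by omega), eq_of_le (i + 1) le_rfl, hv]
      exact hopen i rfl
    · rw [eq_of_le i (by omega), eq_of_le (i + 1) hlt.le, eq_of_le (i + 2) hlt]
      exact hf.openAt i hlt

theorem Adj.dConnected (h : D.Adj x y) (S : Set V) : D.DConnected S x y :=
  let ⟨g, hg, heq, hy⟩ := (D.isOpenWalk_zero S fun _ ↦ x).exists_extend h fun _ hk ↦ by omega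
  ⟨1, g, hg, heq 0 le_rfl, hy⟩

theorem not_blocked_iff_isOpenWalk (p : GPath D.Adj x y)
    (hf : ∀ i (hi : i < p.n + 1), p.f ⟨i, hi⟩ = f i) :
    ¬ p.Blocked D S ↔ D.IsOpenWalk S p.n f := by
  have colliderAt_iff : ∀ i, i + 2 ≤ p.n → (p.ColliderAt D.edge (i + 1) ↔
      D.edge (f i) (f (i + 1)) ∧ D.edge (f (i + 2)) (f (i + 1))) := fun i hi ↦
    ⟨fun ⟨_, _, h⟩ ↦ by simpa only [hf, Nat.add_sub_cancel] using h,
      fun h ↦ ⟨i.succ_pos, hi, by simpa only [hf, Nat.add_sub_cancel] using h⟩⟩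
  constructor
  · intro hp
    refine ⟨fun i hi ↦ ?_, fun i hi ↦ ⟨fun hcol ↦ ?_, fun hncol hS ↦ ?_⟩⟩
    · rw [← hf i (by omega), ← hf (i + 1) (by omega)]
      exact p.adj ⟨i, hi⟩
    · by_contra hnot
      refine hp ⟨i + 1, i.succ_pos, hi, .inr ⟨(colliderAt_iff i hi).2 hcol, fun d hd hS ↦ hnot ?_⟩⟩
      exact ⟨d, hS, by rwa [hf] at hd⟩
    · exact hp ⟨i + 1, i.succ_pos, hi, .inl ⟨mt (colliderAt_iff i hi).1 hncol, by rwa [hf]⟩⟩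
  · rintro hopen ⟨_ | i, hpos, hi, h⟩
    · exact hpos.false
    · rw [colliderAt_iff i hi, hf] at h
      rcases h with ⟨hncol, hS⟩ | ⟨hcol, hS⟩
      · exact (hopen.openAt i hi).2 hncol hS
      · obtain ⟨d, hd, hanc⟩ := (hopen.openAt i hi).1 hcol
        exact hS d hanc hd

theorem not_dSep_iff_dConnected : ¬ D.dSep x y S ↔ D.DConnected S x y := by
  rw [dSep, not_forall]
  constructor
  · rintro ⟨p, hp⟩
    let f : ℕ → V := fun i ↦ p.f ⟨min i p.n, by omega⟩
    have hf : ∀ i (hi : i < p.n + 1), p.f ⟨i, hi⟩ = f i := fun i hi ↦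
      congrArg p.f (Fin.ext (min_eq_left (Nat.le_of_lt_succ hi)).symm)
    exact ⟨p.n, f, (not_blocked_iff_isOpenWalk p hf).1 hp, (hf 0 _).symm.trans p.first,
      (hf p.n _).symm.trans p.last⟩
  · intro h
    obtain ⟨n, f, hf, h₀, hn, hinj⟩ := h.exists_injOn
    let p : GPath D.Adj x y :=
      { n := n
        f := fun i ↦ f i
        inj := fun i j hij ↦ Fin.ext (hinj (Nat.le_of_lt_succ i.2) (Nat.le_of_lt_succ j.2) hij)
        first := h₀
        last := hn
        adj := fun i ↦ hf.adj i i.2 }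
    exact ⟨p, (not_blocked_iff_isOpenWalk p fun _ _ ↦ rfl).2 hf⟩

end OpenWalk

/-! ### The moral graph criterion -/

section MoralGraph

variable {D : Dag V} {S : Set V} {x y u v : V} {n : ℕ} {f : ℕ → V}

/-- The ancestors of `{x, y} ∪ S`, without the nodes of `S` other than `x` and `y`. -/
def moralNodes (D : Dag V) (S : Set V) (x y : V) : Set V :=
  {v ∈ D.ancestors ({x, y} ∪ S) | v ∈ S → v = x ∨ v = y}

/-- Lauritzen's moral graph for separating `x` from `y` given `S`: the subgraph of `D` on the
ancestors of `{x, y} ∪ S`, with its parents of a common child joined and the conditioning nodes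
deleted. -/
def moralGraph (D : Dag V) (S : Set V) (x y : V) : SimpleGraph V where
  Adj u v := u ≠ v ∧ u ∈ D.moralNodes S x y ∧ v ∈ D.moralNodes S x y ∧
    (D.Adj u v ∨ ∃ c ∈ D.ancestors ({x, y} ∪ S), D.edge u c ∧ D.edge v c)
  symm := ⟨fun _ _ ⟨hne, hu, hv, h⟩ ↦
    ⟨hne.symm, hv, hu, h.imp Adj.symm fun ⟨c, hc, huc, hvc⟩ ↦ ⟨c, hc, hvc, huc⟩⟩⟩
  loopless := ⟨fun _ h ↦ h.1 rfl⟩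

theorem IsOpenWalk.collider_of_notMem_moralNodes (hf : D.IsOpenWalk S n f) {i : ℕ} (hi : i ≤ n)
    (hnot : f i ∉ D.moralNodes S (f 0) (f n)) :
    ∃ j, i = j + 1 ∧ i < n ∧ D.edge (f j) (f i) ∧ D.edge (f (i + 1)) (f i) := by
  have hS : f i ∈ S ∧ ¬ (f i = f 0 ∨ f i = f n) := by
    by_contra h
    exact hnot ⟨hf.mem_ancestors hi, fun hS ↦ by tauto⟩
  rcases i with _ | j
  · exact (hS.2 (.inl rfl)).elim
  · have hjn : j + 1 < n := hi.lt_of_ne fun h ↦ hS.2 (.inr (congrArg f h))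
    by_contra h
    exact (hf.openAt j hjn).2 (fun hcol ↦ h ⟨j, rfl, hjn, hcol⟩) hS.1

theorem IsOpenWalk.reachable_moralGraph (hf : D.IsOpenWalk S n f) :
    (D.moralGraph S (f 0) (f n)).Reachable (f 0) (f n) := by
  have hend : ∀ i, i = 0 ∨ i = n → f i ∈ D.moralNodes S (f 0) (f n) := by
    rintro i (rfl | rfl) <;> exact ⟨mem_ancestors_of_mem (by simp), by simp⟩
  have key : ∀ i ≤ n, f i ∈ D.moralNodes S (f 0) (f n) →
      (D.moralGraph S (f 0) (f n)).Reachable (f 0) (f i) := by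
    intro i
    induction i using Nat.strong_induction_on with
    | h i ih =>
      intro hi hmem
      rcases i with _ | k
      · exact .refl _
      by_cases hk : f k ∈ D.moralNodes S (f 0) (f n)
      · have hadj := hf.adj k hi
        exact (ih k k.lt_succ_self (by omega) hk).trans
          (SimpleGraph.Adj.reachable ⟨hadj.ne, hk, hmem, .inl hadj⟩)
      · obtain ⟨j, rfl, -, hin, hin'⟩ := hf.collider_of_notMem_moralNodes (by omega) hk
        have hj : f j ∈ D.moralNodes S (f 0) (f n) := by
          by_contra hj
          obtain ⟨-, -, -, -, hin''⟩ := hf.collider_of_notMem_moralNodes (by omega) hj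
          exact edge_asymm hin hin''
        have hreach := ih j (by omega) (by omega) hj
        by_cases heq : f j = f (j + 1 + 1)
        · rwa [← heq]
        · exact hreach.trans (SimpleGraph.Adj.reachable ⟨heq, hj, hmem,
            .inr ⟨f (j + 1), hf.mem_ancestors (by omega), hin, hin'⟩⟩)
  exact key n le_rfl (hend n (.inr rfl))

theorem DConnected.exists_isOpenWalk_of_edge (h : D.DConnected S x u) (hu : u ∈ S → u = x)
    (huv : D.edge u v) :
    ∃ n f, D.IsOpenWalk S (n + 1) f ∧ f 0 = x ∧ f n = u ∧ f (n + 1) = v := by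
  by_cases hux : u = x
  · subst hux
    obtain ⟨g, hg, heq, hv⟩ := (D.isOpenWalk_zero S fun _ ↦ u).exists_extend (.inl huv)
      fun _ hk ↦ by omega
    exact ⟨0, g, hg, heq 0 le_rfl, heq 0 le_rfl, hv⟩
  · obtain ⟨n, f, hf, rfl, rfl⟩ := h
    obtain ⟨g, hg, heq, hv⟩ := hf.exists_extend (.inl huv) fun k _ ↦
      ⟨fun hcol ↦ (edge_asymm huv hcol.2).elim, fun _ hS ↦ hux (hu hS)⟩
    exact ⟨n, g, hg, heq 0 n.zero_le, heq n le_rfl, hv⟩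

theorem DConnected.of_edge (h : D.DConnected S x u) (hu : u ∈ S → u = x) (huv : D.edge u v) :
    D.DConnected S x v :=
  let ⟨n, f, hf, h₀, _, hn⟩ := h.exists_isOpenWalk_of_edge hu huv
  ⟨n + 1, f, hf, h₀, hn⟩

theorem DConnected.of_anc (h : D.DConnected S x u) (hu : u ∉ D.ancestors S) (huv : D.Anc u v) :
    D.DConnected S x v := by
  induction huv using Relation.ReflTransGen.head_induction_on with
  | refl => exact h
  | head hab _ ih =>
    exact ih (h.of_edge (fun hS ↦ (hu (mem_ancestors_of_mem hS)).elim) hab)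
      fun hb ↦ hu (mem_ancestors_of_edge hab hb)

theorem IsOpenWalk.dConnected_or_of_edge (hf : D.IsOpenWalk S n f)
    (hanc : f n ∈ D.ancestors ({f 0, y} ∪ S))
    (hlast : ∀ k, n = k + 1 → f n ∈ S → D.edge (f k) (f n)) (hv : D.edge v (f n)) :
    D.DConnected S (f 0) v ∨ D.DConnected S (f 0) y := by
  by_cases hS : f n ∈ D.ancestors S
  · obtain ⟨g, hg, heq, hgv⟩ := hf.exists_extend (.inr hv) fun k hk ↦
      ⟨fun _ ↦ hS, fun hncol hmem ↦ hncol ⟨hlast k hk hmem, hv⟩⟩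
    exact .inl ⟨n + 1, g, hg, heq 0 n.zero_le, hgv⟩
  · obtain ⟨t, (rfl | rfl) | ht, hnt⟩ := hanc
    · exact .inl ((Adj.dConnected (.inl hv) S).of_anc hS hnt).symm
    · exact .inr (DConnected.of_anc ⟨n, f, hf, rfl, rfl⟩ hS hnt)
    · exact (hS ⟨t, ht, hnt⟩).elim

theorem DConnected.of_moralGraph_adj (h : D.DConnected S x u)
    (huv : (D.moralGraph S x y).Adj u v) : D.DConnected S x v ∨ D.DConnected S x y := by
  obtain ⟨-, ⟨hanc, hS⟩, -, hadj⟩ := huv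
  rcases eq_or_ne u y with rfl | huy
  · exact .inr h
  have hSx : u ∈ S → u = x := fun hu ↦ (hS hu).resolve_right huy
  rcases hadj with (huv | hvu) | ⟨c, hc, huc, hvc⟩
  · exact .inl (h.of_edge hSx huv)
  · rcases eq_or_ne u x with rfl | hux
    · exact .inl (Adj.dConnected (.inr hvu) S)
    · obtain ⟨n, f, hf, rfl, rfl⟩ := h
      exact hf.dConnected_or_of_edge hanc (fun _ _ hu ↦ (hux (hSx hu)).elim) hvu
  · obtain ⟨n, f, hf, rfl, rfl, rfl⟩ := h.exists_isOpenWalk_of_edge hSx huc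
    refine hf.dConnected_or_of_edge hc (fun k hk _ ↦ ?_) hvc
    obtain rfl := Nat.succ.inj hk
    exact huc

theorem dConnected_iff_reachable_moralGraph :
    D.DConnected S x y ↔ (D.moralGraph S x y).Reachable x y := by
  constructor
  · rintro ⟨n, f, hf, rfl, rfl⟩
    exact hf.reachable_moralGraph
  · intro h
    have key : ∀ v, (D.moralGraph S x y).Reachable x v →
        D.DConnected S x v ∨ D.DConnected S x y := by
      intro v hv
      rw [SimpleGraph.reachable_iff_reflTransGen] at hv
      induction hv with
      | refl => exact .inl ⟨0, fun _ ↦ x, D.isOpenWalk_zero S _, rfl, rfl⟩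
      | tail _ huv ih => exact ih.elim (fun hu ↦ hu.of_moralGraph_adj huv) .inr
    exact (key y h).elim id id

end MoralGraph

end Dag

theorem not_adj_getVert_add_two_of_length_eq_dist {G : SimpleGraph V} {u v : V} {p : G.Walk u v}
    (hp : p.length = G.dist u v) {i : ℕ} (hi : i + 2 ≤ p.length) :
    p.getVert i ≠ p.getVert (i + 2) ∧ ¬ G.Adj (p.getVert i) (p.getVert (i + 2)) := by
  have hdist := SimpleGraph.length_eq_dist_of_subwalk hp
    (((p.drop i).isSubwalk_take 2).trans (p.isSubwalk_drop i))
  rw [SimpleGraph.Walk.take_length, SimpleGraph.Walk.drop_length, SimpleGraph.Walk.drop_getVert,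
    min_eq_left (by omega)] at hdist
  constructor
  · intro heq
    simp [heq] at hdist
  · intro hadj
    simp [SimpleGraph.dist_eq_one_iff_adj.2 hadj] at hdist

namespace Dag

/-! ### Markov equivalence -/

section MarkovEquiv

variable {D D' : Dag V} {S T : Set V} {a b c x y : V}

theorem forcedAncestors_subset_of_anc (h : D.Anc a b) :
    D.forcedAncestors a ⊆ D.forcedAncestors b := by
  induction h with
  | refl => exact subset_rfl
  | tail _ hbc ih =>
    exact ih.trans <| forcedAncestors_subset_of_adj (.inl hbc) fun h ↦ edge_asymm hbc h.edge

theorem StructEquiv.anc_of_mem_forcedAncestors (h : D.StructEquiv D')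
    (hab : a ∈ D.forcedAncestors b) : D'.Anc a b :=
  hab.to_reflTransGen.lift id fun _ _ ↦ Forced.edge_of_structEquiv h

theorem StructEquiv.exists_common_child (h : D.StructEquiv D') (hne : a ≠ b)
    (hadj : ¬ D.Adj a b) (hac : D.edge a c) (hbc : D.edge b c) (hc : c ∈ D.ancestors T) :
    ∃ c' ∈ D'.ancestors T, D'.edge a c' ∧ D'.edge b c' := by
  obtain ⟨t, ht, hct⟩ := hc
  induction hct using Relation.ReflTransGen.head_induction_on with
  | refl => exact ⟨t, mem_ancestors_of_mem ht, (h.collider_iff a t b hne hadj).1 ⟨hac, hbc⟩⟩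
  | @head c d hcd hdt ih =>
    rcases forced_or_forced_or_free (.inl hcd) with hf | hf | hf
    · refine ⟨c, ⟨t, ht, h.anc_of_mem_forcedAncestors ?_⟩,
        (h.collider_iff a c b hne hadj).1 ⟨hac, hbc⟩⟩
      exact forcedAncestors_subset_of_anc hdt (.single hf)
    · exact (edge_asymm hcd hf.edge).elim
    · exact ih (Forced.trans_free_of_vstructure hac hbc hne hadj hf).edge
        (Forced.trans_free_of_vstructure hbc hac hne.symm (mt Adj.symm hadj) hf).edge

theorem StructEquiv.adj_or_common_child_of_moralGraph_adj (h : D.StructEquiv D')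
    (hab : (D.moralGraph S x y).Adj a b) :
    D'.Adj a b ∨ ∃ c ∈ D'.ancestors ({x, y} ∪ S), D'.edge a c ∧ D'.edge b c := by
  obtain ⟨hne, -, -, hadj | ⟨c, hc, hac, hbc⟩⟩ := hab
  · exact .inl ((h.adj_iff a b).1 hadj)
  · by_cases hadj : D.Adj a b
    · exact .inl ((h.adj_iff a b).1 hadj)
    · exact .inr (h.exists_common_child hne hadj hac hbc hc)

theorem StructEquiv.moralGraph_adj_of_collider (h : D.StructEquiv D') (hne : a ≠ c)
    (ha : a ∈ D.moralNodes S x y) (hb : b ∈ D.moralNodes S x y) (hc : c ∈ D.moralNodes S x y)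
    (hab : D'.edge a b) (hcb : D'.edge c b) : (D.moralGraph S x y).Adj a c := by
  refine ⟨hne, ha, hc, or_iff_not_imp_left.2 fun hadj ↦ ?_⟩
  exact ⟨b, hb.1, (h.collider_iff a b c hne hadj).2 ⟨hab, hcb⟩⟩

theorem StructEquiv.reachable_moralGraph (h : D.StructEquiv D')
    (hxy : (D.moralGraph S x y).Reachable x y) : (D'.moralGraph S x y).Reachable x y := by
  obtain ⟨p, hp⟩ := hxy.exists_walk_length_eq_dist
  have hadj : ∀ i < p.length, (D.moralGraph S x y).Adj (p.getVert i) (p.getVert (i + 1)) :=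
    fun i hi ↦ p.adj_getVert_succ hi
  have hstep := fun i hi ↦ h.adj_or_common_child_of_moralGraph_adj (hadj i hi)
  have hmem : ∀ i ≤ p.length, p.getVert i ∈ D'.ancestors ({x, y} ∪ S) := fun i hi ↦ by
    refine mem_ancestors_of_forall_collider (f := p.getVert) (mem_ancestors_of_mem (by simp))
      (mem_ancestors_of_mem (by simp)) (fun i hi ↦ (hstep i hi).imp_right ?_)
      (fun i hi hin hin' ↦ ?_) hi
    · rintro ⟨c, hc, hac, hbc⟩
      exact ⟨mem_ancestors_of_edge hac hc, mem_ancestors_of_edge hbc hc⟩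
    · obtain ⟨hne, hnadj⟩ := not_adj_getVert_add_two_of_length_eq_dist hp hi
      have h₁ := hadj i (by omega)
      have h₂ := hadj (i + 1) (by omega)
      exact (hnadj (h.moralGraph_adj_of_collider hne h₁.2.1 h₁.2.2.1 h₂.2.2.1 hin hin')).elim
  have hreach : ∀ i ≤ p.length, (D'.moralGraph S x y).Reachable x (p.getVert i) := by
    intro i hi
    induction i with
    | zero => simp
    | succ i ih =>
      obtain ⟨hne, ⟨-, hS⟩, ⟨-, hS'⟩, -⟩ := hadj i hi
      exact (ih (by omega)).trans <| SimpleGraph.Adj.reachable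
        ⟨hne, ⟨hmem i (by omega), hS⟩, ⟨hmem (i + 1) hi, hS'⟩, hstep i hi⟩
  simpa using hreach p.length le_rfl

theorem StructEquiv.mEquiv (h : D.StructEquiv D') : D.MEquiv D' := by
  intro x y S
  rw [← not_iff_not, not_dSep_iff_dConnected, not_dSep_iff_dConnected,
    dConnected_iff_reachable_moralGraph, dConnected_iff_reachable_moralGraph]
  exact ⟨h.reachable_moralGraph, h.symm.reachable_moralGraph⟩

theorem not_dConnected_pa (hne : x ≠ y) (hadj : ¬ D.Adj x y) (hxy : ¬ D.Anc x y) :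
    ¬ D.DConnected (D.Pa x) x y := by
  rintro ⟨n, f, hf, rfl, rfl⟩
  rcases n with _ | _ | n
  · exact hne rfl
  · exact hadj (hf.adj 0 (by omega))
  · rcases hf.adj 0 (by omega) with hout | hin
    · have hanc := hf.mem_ancestors (i := 1) (by omega)
      obtain ⟨t, (rfl | rfl) | ht, hanc⟩ := hanc
      · exact D.acyclic _ _ hout hanc
      · exact hxy (.head hout hanc)
      · exact D.acyclic _ _ hout (hanc.tail ht)
    · exact (hf.openAt 0 (by omega)).2 (fun hcol ↦ edge_asymm hin hcol.1) hin

theorem exists_not_dConnected (hne : x ≠ y) (hadj : ¬ D.Adj x y) :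
    ∃ S, ¬ D.DConnected S x y := by
  by_cases hxy : D.Anc x y
  · have hyx : ¬ D.Anc y x := fun hyx ↦ by
      obtain rfl | ⟨z, hxz, hzy⟩ := hxy.cases_head
      · exact hne rfl
      · exact D.acyclic x z hxz (hzy.trans hyx)
    exact ⟨D.Pa y, fun h ↦ not_dConnected_pa hne.symm (mt Adj.symm hadj) hyx h.symm⟩
  · exact ⟨D.Pa x, not_dConnected_pa hne hadj hxy⟩

theorem adj_iff_forall_dConnected (hne : x ≠ y) : D.Adj x y ↔ ∀ S, D.DConnected S x y :=
  ⟨Adj.dConnected, fun h ↦ by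
    by_contra hadj
    obtain ⟨S, hS⟩ := exists_not_dConnected hne hadj
    exact hS (h S)⟩

theorem OpenAt.dConnected (h : D.OpenAt S a b c) (hab : D.Adj a b) (hbc : D.Adj b c) :
    D.DConnected S a c := by
  let f : ℕ → V := fun i ↦ if i = 0 then a else if i = 1 then b else c
  refine ⟨2, f, ⟨fun i hi ↦ ?_, fun i hi ↦ ?_⟩, rfl, rfl⟩
  · interval_cases i
    exacts [hab, hbc]
  · obtain rfl : i = 0 := by omega
    exact h

theorem MEquiv.dConnected_iff (h : D.MEquiv D') : D.DConnected S x y ↔ D'.DConnected S x y := by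
  rw [← not_dSep_iff_dConnected, h, not_dSep_iff_dConnected]

theorem MEquiv.symm (h : D.MEquiv D') : D'.MEquiv D :=
  fun x y S ↦ (h x y S).symm

theorem MEquiv.adj_of_adj (h : D.MEquiv D') (hab : D.Adj a b) : D'.Adj a b :=
  (adj_iff_forall_dConnected hab.ne).2 fun S ↦ h.dConnected_iff.1 (hab.dConnected S)

theorem MEquiv.collider_of_collider (h : D.MEquiv D') (hne : a ≠ c) (hadj : ¬ D.Adj a c)
    (hab : D.edge a b) (hcb : D.edge c b) : D'.edge a b ∧ D'.edge c b := by
  by_contra hncol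
  obtain ⟨S, hS⟩ := exists_not_dConnected hne hadj
  have hbS : b ∉ S := fun hb ↦ hS <| OpenAt.dConnected
    ⟨fun _ ↦ mem_ancestors_of_mem hb, fun hcol ↦ (hcol ⟨hab, hcb⟩).elim⟩ (.inl hab) (.inr hcb)
  exact hS <| h.dConnected_iff.2 <| OpenAt.dConnected ⟨fun hcol ↦ (hncol hcol).elim, fun _ ↦ hbS⟩
    (h.adj_of_adj (.inl hab)) (h.adj_of_adj (.inr hcb))

theorem MEquiv.structEquiv (h : D.MEquiv D') : D.StructEquiv D' where
  adj_iff _ _ := ⟨h.adj_of_adj, h.symm.adj_of_adj⟩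
  collider_iff _ _ _ hne hadj :=
    ⟨fun hcol ↦ h.collider_of_collider hne hadj hcol.1 hcol.2, fun hcol ↦
      h.symm.collider_of_collider hne (mt h.symm.adj_of_adj hadj) hcol.1 hcol.2⟩

theorem mEquiv_iff_structEquiv : D.MEquiv D' ↔ D.StructEquiv D' :=
  ⟨MEquiv.structEquiv, StructEquiv.mEquiv⟩

end MarkovEquiv

section CPDAG

variable {D : Dag V} {a b x y : V}

theorem cpDir_iff_forced [Finite V] : D.CpDir a b ↔ D.Forced a b := by
  constructor
  · intro h
    by_contra hab
    obtain ⟨D', hs, hnot⟩ := exists_structEquiv_not_edge hab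
    exact hnot (h D' (mEquiv_iff_structEquiv.2 hs))
  · exact fun h D' hD' ↦ h.edge_of_structEquiv (mEquiv_iff_structEquiv.1 hD')

theorem PossAn.forcedAncestors_subset [Finite V] (h : D.PossAn x y) :
    D.forcedAncestors x ⊆ D.forcedAncestors y := by
  obtain ⟨p, hp⟩ := h
  have hmono : Monotone fun i ↦ D.forcedAncestors (p.f i) := Fin.monotone_iff_le_succ.2 fun i ↦
    forcedAncestors_subset_of_adj (p.adj i) (mt cpDir_iff_forced.2 (hp i))
  simpa only [← p.first, ← p.last] using hmono (Fin.mk_le_mk.2 p.n.zero_le)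

theorem not_possAn_of_cpDir [Finite V] (h : D.CpDir y x) : ¬ D.PossAn x y := fun hxy ↦
  D.notMem_forcedAncestors_self y (hxy.forcedAncestors_subset (.single (cpDir_iff_forced.1 h)))

theorem possAn_of_not_cpDir (hxy : D.Adj x y) (h : ¬ D.CpDir y x) : D.PossAn x y := by
  let p : GPath D.Adj x y :=
    { n := 1
      f := ![x, y]
      inj := by simpa [Function.Injective, Fin.forall_fin_two, eq_comm] using hxy.ne
      first := rfl
      last := rfl
      adj := fun i ↦ by
        obtain rfl := Subsingleton.elim i 0
        exact hxy }
  refine ⟨p, fun i ↦ ?_⟩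
  obtain rfl := Subsingleton.elim i (0 : Fin 1)
  exact h

theorem possAn_iff_not_cpDir [Finite V] (hxy : D.Adj x y) : D.PossAn x y ↔ ¬ D.CpDir y x :=
  ⟨fun h hyx ↦ not_possAn_of_cpDir hyx h, possAn_of_not_cpDir hxy⟩

theorem CpDir.not_cpDir (h : D.CpDir a b) : ¬ D.CpDir b a := fun h' ↦
  edge_asymm (h D fun _ _ _ ↦ .rfl) (h' D fun _ _ _ ↦ .rfl)

theorem mem_cpCh_union_cpSib_iff (hxy : D.Adj x y) :
    y ∈ D.CpCh x ∪ D.CpSib x ↔ ¬ D.CpDir y x := by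
  refine ⟨?_, fun hyx ↦ or_iff_not_imp_left.2 fun h ↦ ⟨hxy, h, hyx⟩⟩
  rintro (h | ⟨-, -, h⟩)
  exacts [CpDir.not_cpDir h, h]

end CPDAG

end Dag

/-- For distinct adjacent `X`, `Y` in the CPDAG `G` of the MEC of a DAG:
if `Y ∈ Pa_G(X)` then `X` is not a possible ancestor of `Y` in `G`; consequently,
`X` is a possible ancestor of `Y` iff `Y ∈ Ch_G(X) ∪ Sib_G(X)`. -/
theorem possAn_adjacent_iff_child_or_sibling
    {V : Type*} [Fintype V] (D : Dag V) (X Y : V) (hXY : X ≠ Y)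
    (hadj : D.Adj X Y) :
    (Y ∈ D.CpPa X → ¬ D.PossAn X Y) ∧
      (D.PossAn X Y ↔ Y ∈ D.CpCh X ∪ D.CpSib X) := by
  exact ⟨Dag.not_possAn_of_cpDir,
    (Dag.possAn_iff_not_cpDir hadj).trans (Dag.mem_cpCh_union_cpSib_iff hadj).symm⟩
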